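/- Let X = { (i,j) : i, j ∈ ℕ, i < j } with the partial order (i,j) ≺ (i′,j′) iff j < j′ and either i = i′ or j < i′. For each integer l > 0 let S_l = { (k,l) : k < l } ⊆ X, and let U_l be the dual order ideal of X generated by S_l (the set of elements of X that are ≥ some element of S_l). Then the sets U_l, for l > 0, are pairwise distinct and pairwise incomparable under inclusion; hence the poset of dual order ideals of X contains an infinite antichain, even though X itself has no infinite antichains and no infinite descending chains. -/

import Mathlib

/-- The set `X = { (i,j) : i,j ∈ ℕ, i < j }`. -/
def BergmanX : Type := { p : ℕ × ℕ // p.1 < p.2 }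

/-- The relation `(i,j) ≺ (i',j')` iff `j < j'` and (`i = i'` or `j < i'`). -/
def BergmanPrec (x y : BergmanX) : Prop :=
  x.1.2 < y.1.2 ∧ (x.1.1 = y.1.1 ∨ x.1.2 < y.1.1)

/-- The associated (non-strict) partial order `x ⪯ y` iff `x = y` or `x ≺ y`. -/
def BergmanLe (x y : BergmanX) : Prop :=
  x = y ∨ BergmanPrec x y

/-- A dual order ideal (upper set) of `X`. -/
def BergmanUpperSet (U : Set BergmanX) : Prop :=
  ∀ x ∈ U, ∀ y : BergmanX, BergmanLe x y → y ∈ U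

/-- `U_l`: the dual order ideal of `X` generated by `S_l = { (k,l) : k < l }`. -/
def BergmanU (l : ℕ) : Set BergmanX :=
  { y : BergmanX | ∃ k : ℕ, ∃ h : k < l, BergmanLe ⟨(k, l), h⟩ y }

/-!
For `l > 0`, `U_l` consists of the pairs `(i, j)` with `i ≠ l ≤ j`. For `0 < a < b` the pair
`(0, a)` therefore lies in `U_a` but not in `U_b`, and for `0 < b < a` the pair `(b, a)` does.

Elements of `X` with equal first coordinates are comparable, and `(i, j) ≺ (i', j')` as soon as
`j < i'`. The first coordinate is thus injective on an antichain and bounded there by the second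
coordinate of any of its elements. Descending chains end because `≺` increases the second
coordinate.
-/

theorem mem_bergmanU_iff {l : ℕ} {y : BergmanX} :
    y ∈ BergmanU l ↔ 0 < l ∧ y.1.1 ≠ l ∧ l ≤ y.1.2 := by
  constructor
  · rintro ⟨k, hk, rfl | ⟨hsnd, hfst⟩⟩
    · exact ⟨Nat.zero_lt_of_lt hk, hk.ne, le_rfl⟩
    · dsimp only at hsnd hfst
      omega
  · obtain ⟨⟨i, j⟩, hij⟩ := y
    rintro ⟨hl, hne, hle⟩
    dsimp only at hij hne hle
    rcases hne.lt_or_gt with hil | hli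
    · rcases hle.eq_or_lt with rfl | hlj
      · exact ⟨i, hil, Or.inl rfl⟩
      · exact ⟨i, hil, Or.inr ⟨hlj, Or.inl rfl⟩⟩
    · exact ⟨0, hl, Or.inr ⟨hli.trans hij, Or.inr hli⟩⟩

theorem bergmanUpperSet_bergmanU (l : ℕ) : BergmanUpperSet (BergmanU l) := by
  rintro x hx y (rfl | ⟨hsnd, hfst⟩)
  · exact hx
  · rw [mem_bergmanU_iff] at hx ⊢
    omega

theorem bergmanU_subset_bergmanU_iff {a b : ℕ} :
    BergmanU a ⊆ BergmanU b ↔ a = 0 ∨ a = b := by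
  constructor
  · intro hsub
    by_contra! ⟨ha, hab⟩
    have mem_of_lt {k : ℕ} (hk : k < a) : (⟨(k, a), hk⟩ : BergmanX) ∈ BergmanU b :=
      hsub ⟨k, hk, Or.inl rfl⟩
    rcases hab.lt_or_gt with h | h
    · exact (mem_bergmanU_iff.mp (mem_of_lt (Nat.pos_of_ne_zero ha))).2.2.not_gt h
    · exact (mem_bergmanU_iff.mp (mem_of_lt h)).2.1 rfl
  · rintro (rfl | rfl)
    · exact fun _ hy => absurd (mem_bergmanU_iff.mp hy).1 (lt_irrefl 0)
    · exact subset_rfl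

theorem bergmanU_injective : Function.Injective BergmanU := by
  intro a b hab
  have hab_sub := bergmanU_subset_bergmanU_iff.mp hab.subset
  have hba_sub := bergmanU_subset_bergmanU_iff.mp hab.symm.subset
  omega

theorem isAntichain_bergmanU_image_Ioi : IsAntichain (· ⊆ ·) (BergmanU '' Set.Ioi 0) := by
  rintro _ ⟨a, ha, rfl⟩ _ ⟨b, -, rfl⟩ hne hsub
  rcases bergmanU_subset_bergmanU_iff.mp hsub with rfl | rfl
  · exact lt_irrefl 0 ha
  · exact hne rfl

theorem bergmanPrec_trichotomy_of_fst_eq {x y : BergmanX} (h : x.1.1 = y.1.1) :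
    BergmanPrec x y ∨ x = y ∨ BergmanPrec y x := by
  rcases lt_trichotomy x.1.2 y.1.2 with hlt | heq | hgt
  · exact Or.inl ⟨hlt, Or.inl h⟩
  · exact Or.inr (Or.inl (Subtype.ext (Prod.ext h heq)))
  · exact Or.inr (Or.inr ⟨hgt, Or.inl h.symm⟩)

theorem bergmanPrec_of_snd_lt_fst {x y : BergmanX} (h : x.1.2 < y.1.1) : BergmanPrec x y :=
  ⟨h.trans y.2, Or.inr h⟩

theorem injOn_fst_of_isAntichain_bergmanPrec {Y : Set BergmanX} (hY : IsAntichain BergmanPrec Y) :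
    Set.InjOn (fun y : BergmanX => y.1.1) Y := by
  intro x hx y hy hxy
  rcases bergmanPrec_trichotomy_of_fst_eq hxy with h | h | h
  · exact hY.eq hx hy h
  · exact h
  · exact hY.eq' hx hy h

theorem fst_le_snd_of_isAntichain_bergmanPrec {Y : Set BergmanX} (hY : IsAntichain BergmanPrec Y)
    {x y : BergmanX} (hx : x ∈ Y) (hy : y ∈ Y) : y.1.1 ≤ x.1.2 := by
  by_contra! hlt
  have hxy : x = y := hY.eq hx hy (bergmanPrec_of_snd_lt_fst hlt)
  subst hxy
  exact hlt.not_gt x.2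

theorem finite_of_isAntichain_bergmanPrec {Y : Set BergmanX} (hY : IsAntichain BergmanPrec Y) :
    Y.Finite := by
  rcases Y.eq_empty_or_nonempty with rfl | ⟨x, hx⟩
  · exact Set.finite_empty
  · exact Set.Finite.of_injOn (f := fun y : BergmanX => y.1.1)
      (fun _ hy => fst_le_snd_of_isAntichain_bergmanPrec hY hx hy)
      (injOn_fst_of_isAntichain_bergmanPrec hY) (Set.finite_Iic x.1.2)

theorem wellFounded_bergmanPrec : WellFounded BergmanPrec :=
  Subrelation.wf And.left (measure fun x : BergmanX => x.1.2).wf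

/-- **An infinite antichain of dual order ideals of `X`.**  The dual order ideals
`U_l` (for `l > 0`) generated by the antichains `S_l = { (k,l) : k < l }` are
pairwise distinct and pairwise incomparable under inclusion; hence the poset of
dual order ideals of `X`, ordered by inclusion, contains an infinite antichain,
even though `X` itself has no infinite antichains and no infinite strictly
descending chains. -/
theorem bergmanX_dual_order_ideals_infinite_antichain :
    (∀ l : ℕ, BergmanUpperSet (BergmanU l)) ∧
    (∀ l₁ l₂ : ℕ, 0 < l₁ → 0 < l₂ → l₁ ≠ l₂ →
      BergmanU l₁ ≠ BergmanU l₂ ∧ ¬ BergmanU l₁ ⊆ BergmanU l₂) ∧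
    (∃ 𝒜 : Set (Set BergmanX), (∀ U ∈ 𝒜, BergmanUpperSet U) ∧
      𝒜.Infinite ∧ IsAntichain (· ⊆ ·) 𝒜) ∧
    (∀ Y : Set BergmanX, IsAntichain BergmanPrec Y → Y.Finite) ∧
    (¬ ∃ f : ℕ → BergmanX, ∀ m : ℕ, BergmanPrec (f (m + 1)) (f m)) := by
  refine ⟨bergmanUpperSet_bergmanU, ?_, ⟨BergmanU '' Set.Ioi 0, ?_, ?_, ?_⟩, ?_, ?_⟩
  · intro a b ha _ hab
    refine ⟨bergmanU_injective.ne hab, ?_⟩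
    rw [bergmanU_subset_bergmanU_iff]
    exact not_or_intro ha.ne' hab
  · exact Set.forall_mem_image.mpr fun l _ => bergmanUpperSet_bergmanU l
  · exact (Set.Ioi_infinite 0).image bergmanU_injective.injOn
  · exact isAntichain_bergmanU_image_Ioi
  · exact fun _ => finite_of_isAntichain_bergmanPrec
  · rintro ⟨f, hf⟩
    exact (wellFounded_iff_isEmpty_descending_chain.mp wellFounded_bergmanPrec).false ⟨f, hf⟩
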